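/- Let N ≥ 1, 1 ≤ n ≤ N, and 0 < ε < 1. Then Pr[S < (1−ε)·n/N] < exp(−(n/2)·(ε²/2 − ε³/3)), where S = Σ_{j=1}^n Q_j². -/

import Mathlib

open MeasureTheory Finset

noncomputable section

/-- The real sign value of a Boolean. -/
def rad (b : Bool) : ℝ := if b then 1 else -1

/-- The symmetric random sign matrix: entries `r i j = r j i`, determined by the
independent Booleans `ω i j` for `i ≤ j`. -/
def rsym {N : ℕ} (ω : Fin N → Fin N → Bool) (i j : Fin N) : ℝ :=
  if i ≤ j then rad (ω i j) else rad (ω j i)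

/-- The uniform probability measure on Boolean square arrays, making the upper-triangular
entries of `rsym` independent Rademacher random variables. -/
def μsym (N : ℕ) : Measure (Fin N → Fin N → Bool) :=
  (PMF.uniformOfFintype (Fin N → Fin N → Bool)).toMeasure

/-- `Q j = N^{-1/2} ∑_k r_{jk} α_k`. -/
def Q {N n : ℕ} (hn : n ≤ N) (α : Fin N → ℝ) (j : Fin n)
    (ω : Fin N → Fin N → Bool) : ℝ :=
  (Real.sqrt N)⁻¹ * ∑ k, rsym ω (Fin.castLE hn j) k * α k

/-- `S = ∑_{j=1}^n Q_j^2`. -/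
def S {N n : ℕ} (hn : n ≤ N) (α : Fin N → ℝ) (ω : Fin N → Fin N → Bool) : ℝ :=
  ∑ j : Fin n, (Q hn α j ω) ^ 2

open scoped Matrix

lemma step_cosh {V : Type*} [AddCommGroup V] [Module ℝ V] (H : V →ₗ[ℝ] V →ₗ[ℝ] ℝ)
    (hs : ∀ u w, H u w = H w u) (X v : V) :
    Real.exp (-(H (X + v) (X + v))) + Real.exp (-(H (X + -v) (X + -v)))
      ≤ 2 * Real.exp (-(H X X - 2 * (H v X * H v X)) - H v v) := by
  have e1 : H (X + v) (X + v) = H X X + 2 * H v X + H v v := by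
    simp only [map_add, LinearMap.add_apply, hs X v]; ring
  have e2 : H (X + -v) (X + -v) = H X X - 2 * H v X + H v v := by
    simp only [map_add, map_neg, LinearMap.add_apply, LinearMap.neg_apply, hs X v]; ring
  have hc := Real.cosh_le_exp_half_sq (2 * H v X)
  rw [Real.cosh_eq] at hc
  rw [e1, e2]
  have a1 : -(H X X + 2 * H v X + H v v) = -(2 * H v X) + (-(H X X) - H v v) := by ring
  have a2 : -(H X X - 2 * H v X + H v v) = (2 * H v X) + (-(H X X) - H v v) := by ring
  have a3 : -(H X X - 2 * (H v X * H v X)) - H v v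
      = (2 * H v X) ^ 2 / 2 + (-(H X X) - H v v) := by ring
  rw [a1, a2, a3, Real.exp_add, Real.exp_add, Real.exp_add]
  have hp := Real.exp_pos (-(H X X) - H v v)
  nlinarith

lemma flip_sum {S : Type*} [Fintype S] [DecidableEq S] (s : S) (F : (S → Bool) → ℝ) :
    ∑ r, F (Function.update r s (!(r s))) = ∑ r, F r := by
  have hinv : Function.Involutive (fun r : S → Bool => Function.update r s (!(r s))) := by
    intro r; ext t; by_cases h : t = s
    · subst h; simp
    · simp [h]
  exact Equiv.sum_comp hinv.toPerm F

lemma main_ind {S ι : Type*} [Fintype S] [DecidableEq S] [Fintype ι]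
    (v : S → ι → ℝ) (h : ℝ) (μ : S → ℝ) (hμ0 : ∀ s, 0 ≤ μ s)
    (hμ : ∀ s, 1 ≤ (1 + μ s) * (1 - 2 * (h * (v s ⬝ᵥ v s)))) (A : Finset S) :
    ∀ (H : (ι → ℝ) →ₗ[ℝ] (ι → ℝ) →ₗ[ℝ] ℝ) (P : (ι → ℝ) → ℝ),
      (∀ u w, H u w = H w u) → (∀ u, H u u ≤ h * (u ⬝ᵥ u)) →
      (∀ u z, 2 * (u ⬝ᵥ z) - P z ≤ H u u) →
      ∑ r : S → Bool, Real.exp (-(H (∑ s ∈ A, rad (r s) • v s) (∑ s ∈ A, rad (r s) • v s)))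
        ≤ Fintype.card (S → Bool) * Real.exp (-(∑ s ∈ A, (2 * (v s ⬝ᵥ (h • v s)) - P (h • v s))
          - h ^ 2 * ∑ s ∈ A, ∑ t ∈ A, if t = s then 0 else (1 + 2 * μ s) * (v s ⬝ᵥ v t) ^ 2)) := by
  induction A using Finset.induction_on with
  | empty =>
    intro H P _ _ _
    simp
  | insert s A hsA ih =>
    intro H P hsym hle hinv
    set τ := H (v s) (v s) with hτ
    let H' : (ι → ℝ) →ₗ[ℝ] (ι → ℝ) →ₗ[ℝ] ℝ := H - (2:ℝ) • ((H (v s)).smulRight (H (v s)))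
    let P' : (ι → ℝ) → ℝ := fun z => P z + 2 * (1 + μ s) * (v s ⬝ᵥ z) ^ 2
    have hH' : ∀ u w, H' u w = H u w - 2 * (H (v s) u * H (v s) w) := by
      intro u w; simp [H']
    have hτle : τ ≤ h * (v s ⬝ᵥ v s) := hle _
    have hτ2 : 1 ≤ (1 + μ s) * (1 - 2 * τ) := by nlinarith [hμ s, hμ0 s]
    have IH := ih H' P' (by intro u w; rw [hH', hH', hsym u w]; ring)
      (by intro u; rw [hH']; nlinarith [hle u, mul_self_nonneg (H (v s) u)])
      (by
        intro u z
        rw [hH']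
        have := hinv (u - (2 * H (v s) u) • v s) z
        have e : H (u - (2 * H (v s) u) • v s) (u - (2 * H (v s) u) • v s)
            = H u u - 4 * (H (v s) u) ^ 2 + 4 * (H (v s) u) ^ 2 * τ := by
          simp only [map_sub, map_smul, LinearMap.sub_apply, LinearMap.smul_apply, smul_eq_mul,
            hsym u (v s)]
          ring
        rw [e, sub_dotProduct, smul_dotProduct, smul_eq_mul] at this
        simp only [P']
        set p := H (v s) u
        set w := v s ⬝ᵥ z
        have hl : 0 < 1 + μ s := by linarith [hμ0 s]
        have key : 0 ≤ (1 - 2 * τ) * p ^ 2 - 2 * p * w + (1 + μ s) * w ^ 2 := by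
          have h1 : 0 ≤ (1 + μ s) * ((1 - 2 * τ) * p ^ 2 - 2 * p * w + (1 + μ s) * w ^ 2) := by
            nlinarith [sq_nonneg (p - (1 + μ s) * w), sq_nonneg p]
          exact nonneg_of_mul_nonneg_right h1 hl
        nlinarith)
    set Y : (S → Bool) → (ι → ℝ) := fun r => ∑ t ∈ A, rad (r t) • v t with hY
    have hYflip : ∀ r, Y (Function.update r s (!(r s))) = Y r := by
      intro r
      apply Finset.sum_congr rfl
      intro t ht
      have : t ≠ s := by rintro rfl; exact hsA ht
      simp [this]
    have hsum : ∑ r : S → Bool, Real.exp (-(H (∑ t ∈ insert s A, rad (r t) • v t)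
          (∑ t ∈ insert s A, rad (r t) • v t)))
        ≤ ∑ r : S → Bool, Real.exp (-(H' (Y r) (Y r)) - τ) := by
      set F : (S → Bool) → ℝ := fun r => Real.exp (-(H (∑ t ∈ insert s A, rad (r t) • v t)
          (∑ t ∈ insert s A, rad (r t) • v t))) with hF
      have h2 : ∑ r, F r = (∑ r, (F r + F (Function.update r s (!(r s))))) / 2 := by
        rw [Finset.sum_add_distrib, flip_sum]; ring
      rw [h2, Finset.sum_div]
      apply Finset.sum_le_sum
      intro r _
      have f1 : ∀ r, (∑ t ∈ insert s A, rad (r t) • v t) = Y r + rad (r s) • v s := by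
        intro r; rw [Finset.sum_insert hsA, add_comm]
      simp only [hF, f1, hYflip, Function.update_self]
      rw [hH']
      have := step_cosh H hsym (Y r) (v s)
      have rt : rad true = 1 := by simp [rad]
      have rf : rad false = -1 := by simp [rad]
      cases hr : r s
      · simp only [Bool.not_false, rt, rf, one_smul, neg_smul]; linarith
      · simp only [Bool.not_true, rt, rf, one_smul, neg_smul]; linarith
    refine hsum.trans ?_
    have hsp : ∀ r : S → Bool, Real.exp (-(H' (Y r) (Y r)) - τ)
        = Real.exp (-(H' (Y r) (Y r))) * Real.exp (-τ) := by
      intro r; rw [← Real.exp_add, sub_eq_add_neg]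
    simp only [hsp]
    rw [← Finset.sum_mul]
    refine (mul_le_mul_of_nonneg_right IH (Real.exp_pos _).le).trans ?_
    rw [mul_assoc, ← Real.exp_add]
    apply mul_le_mul_of_nonneg_left _ (by positivity)
    apply Real.exp_le_exp.2
    have g0 := hinv (v s) (h • v s)
    have hcomm : ∀ t, v t ⬝ᵥ v s = v s ⬝ᵥ v t := fun t => dotProduct_comm _ _
    have dbl : (∑ a ∈ insert s A, ∑ t ∈ insert s A,
        if t = a then 0 else (1 + 2 * μ a) * (v a ⬝ᵥ v t) ^ 2)
        = (∑ a ∈ A, ∑ t ∈ A, if t = a then 0 else (1 + 2 * μ a) * (v a ⬝ᵥ v t) ^ 2)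
          + ∑ t ∈ A, (2 + 2 * μ s + 2 * μ t) * (v s ⬝ᵥ v t) ^ 2 := by
      simp only [Finset.sum_insert hsA, if_true, Finset.sum_add_distrib]
      have : ∑ t ∈ A, (2 + 2 * μ s + 2 * μ t) * (v s ⬝ᵥ v t) ^ 2
        = ∑ t ∈ A, (if t = s then 0 else (1 + 2 * μ s) * (v s ⬝ᵥ v t) ^ 2)
          + ∑ t ∈ A, (if s = t then 0 else (1 + 2 * μ t) * (v t ⬝ᵥ v s) ^ 2) := by
        rw [← Finset.sum_add_distrib]
        apply Finset.sum_congr rfl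
        intro t ht
        have : t ≠ s := by rintro rfl; exact hsA ht
        rw [if_neg this, if_neg this.symm, hcomm]; ring
      rw [this]; ring
    have sg : ∑ t ∈ A, (2 * (v t ⬝ᵥ (h • v t)) - P' (h • v t))
        = ∑ t ∈ A, (2 * (v t ⬝ᵥ (h • v t)) - P (h • v t))
          - h ^ 2 * ∑ t ∈ A, (2 + 2 * μ s) * (v s ⬝ᵥ v t) ^ 2 := by
      rw [Finset.mul_sum, ← Finset.sum_sub_distrib]
      apply Finset.sum_congr rfl
      intro t _
      simp only [P', dotProduct_smul, smul_eq_mul]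
      ring
    have cmp : ∑ t ∈ A, (2 + 2 * μ s) * (v s ⬝ᵥ v t) ^ 2
        ≤ ∑ t ∈ A, (2 + 2 * μ s + 2 * μ t) * (v s ⬝ᵥ v t) ^ 2 := by
      apply Finset.sum_le_sum
      intro t _
      apply mul_le_mul_of_nonneg_right _ (sq_nonneg _)
      linarith [hμ0 t]
    have cmp2 := mul_le_mul_of_nonneg_left cmp (sq_nonneg h)
    rw [dbl, sg, Finset.sum_insert hsA]
    nlinarith

lemma main_bound {S ι : Type*} [Fintype S] [DecidableEq S] [Fintype ι]
    (v : S → ι → ℝ) (h : ℝ) (h0 : 0 < h) (h1 : h ≤ 1 / 8)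
    (hx1 : ∀ s, v s ⬝ᵥ v s ≤ 1)
    (hg : ∀ s, ∑ t, (v s ⬝ᵥ v t) ^ 2 ≤ v s ⬝ᵥ v s + (v s ⬝ᵥ v s) ^ 2 / 2)
    (n : ℝ) (hn : ∑ s, v s ⬝ᵥ v s = n) :
    ∑ r : S → Bool, Real.exp (-(h * ((∑ s, rad (r s) • v s) ⬝ᵥ (∑ s, rad (r s) • v s))))
      ≤ Fintype.card (S → Bool) * Real.exp (-(h * n - h ^ 2 * n)) := by
  have hx0 : ∀ s, 0 ≤ v s ⬝ᵥ v s := fun s => by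
    simp only [dotProduct]; exact Finset.sum_nonneg fun i _ => mul_self_nonneg _
  let H : (ι → ℝ) →ₗ[ℝ] (ι → ℝ) →ₗ[ℝ] ℝ :=
    LinearMap.mk₂ ℝ (fun u w => h * (u ⬝ᵥ w))
      (by intros; simp [add_dotProduct, mul_add])
      (by intros; simp [smul_dotProduct]; ring)
      (by intros; simp [dotProduct_add, mul_add])
      (by intros; simp [dotProduct_smul]; ring)
  have hH : ∀ u w, H u w = h * (u ⬝ᵥ w) := fun u w => rfl
  let μ : S → ℝ := fun s => (v s ⬝ᵥ v s) / 4 + (v s ⬝ᵥ v s) ^ 2 / 12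
  have hμ0 : ∀ s, 0 ≤ μ s := fun s => by have := hx0 s; simp only [μ]; positivity
  have key := main_ind v h μ hμ0 (by
      intro s
      have a := hx0 s
      have b := hx1 s
      have c := hμ0 s
      have d : (1 + μ s) * (1 - (v s ⬝ᵥ v s) / 4) ≤ (1 + μ s) * (1 - 2 * (h * (v s ⬝ᵥ v s))) := by
        apply mul_le_mul_of_nonneg_left _ (by linarith)
        nlinarith
      refine le_trans ?_ d
      simp only [μ]
      set x := v s ⬝ᵥ v s
      nlinarith [mul_nonneg (sq_nonneg x) (sub_nonneg.2 b)]) Finset.univ H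
    (fun z => (z ⬝ᵥ z) / h)
    (by intro u w; rw [hH, hH, dotProduct_comm])
    (by intro u; rw [hH])
    (by
      intro u z
      rw [hH]
      have : 0 ≤ (h • u - z) ⬝ᵥ (h • u - z) := by
        simp only [dotProduct]; exact Finset.sum_nonneg fun i _ => mul_self_nonneg _
      simp only [sub_dotProduct, dotProduct_sub, smul_dotProduct, dotProduct_smul, smul_eq_mul,
        dotProduct_comm z u] at this
      have h3 : 2 * (u ⬝ᵥ z) - (z ⬝ᵥ z) / h = (2 * h * (u ⬝ᵥ z) - z ⬝ᵥ z) / h := by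
        field_simp
      rw [h3, div_le_iff₀ h0]
      nlinarith)
  simp only [hH] at key
  refine key.trans ?_
  apply mul_le_mul_of_nonneg_left _ (by positivity)
  apply Real.exp_le_exp.2
  have e1 : ∑ s, (2 * (v s ⬝ᵥ (h • v s)) - ((h • v s) ⬝ᵥ (h • v s)) / h) = h * n := by
    rw [← hn, Finset.mul_sum]
    apply Finset.sum_congr rfl
    intro s _
    simp only [smul_dotProduct, dotProduct_smul, smul_eq_mul]
    field_simp
    ring
  have e2 : (∑ s, ∑ t, if t = s then 0 else (1 + 2 * μ s) * (v s ⬝ᵥ v t) ^ 2) ≤ n := by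
    rw [← hn]
    apply Finset.sum_le_sum
    intro s _
    have : (∑ t, if t = s then 0 else (1 + 2 * μ s) * (v s ⬝ᵥ v t) ^ 2)
        = (1 + 2 * μ s) * (∑ t, (v s ⬝ᵥ v t) ^ 2 - (v s ⬝ᵥ v s) ^ 2) := by
      have q : ∀ t, (if t = s then 0 else (1 + 2 * μ s) * (v s ⬝ᵥ v t) ^ 2)
        = (1 + 2 * μ s) * (v s ⬝ᵥ v t) ^ 2
          - if t = s then (1 + 2 * μ s) * (v s ⬝ᵥ v t) ^ 2 else 0 := by
        intro t; split_ifs <;> simp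
      simp only [q, Finset.sum_sub_distrib, Finset.sum_ite_eq', Finset.mem_univ, if_true]
      rw [← Finset.mul_sum]; ring
    rw [this]
    have a := hx0 s
    have b := hx1 s
    have c := hμ0 s
    have d := mul_le_mul_of_nonneg_left (hg s) (by linarith : 0 ≤ 1 + 2 * μ s)
    have e : (1 + 2 * μ s) * (v s ⬝ᵥ v s - (v s ⬝ᵥ v s) ^ 2 / 2) ≤ v s ⬝ᵥ v s := by
      simp only [μ]
      set x := v s ⬝ᵥ v s
      have : 0 ≤ x ^ 3 := by positivity
      have : 0 ≤ x ^ 4 := by positivity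
      nlinarith
    nlinarith
  rw [e1]
  nlinarith [mul_le_mul_of_nonneg_left e2 (sq_nonneg h)]

/-- mask -/
def msk {N : ℕ} (n : ℕ) (i : Fin N) : ℝ := if (i : ℕ) < n then 1 else 0

def ca {N : ℕ} (n : ℕ) (α : Fin N → ℝ) (p : Fin N × Fin N) : ℝ :=
  if p.1 ≤ p.2 then msk n p.1 * α p.2 else 0

def cb {N : ℕ} (n : ℕ) (α : Fin N → ℝ) (p : Fin N × Fin N) : ℝ :=
  if p.1 < p.2 then msk n p.2 * α p.1 else 0

def vv {N : ℕ} (n : ℕ) (α : Fin N → ℝ) (p : Fin N × Fin N) : Fin N → ℝ :=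
  fun k => (if k = p.1 then ca n α p else 0) + (if k = p.2 then cb n α p else 0)

lemma vv_dot {N : ℕ} (n : ℕ) (α : Fin N → ℝ) (p : Fin N × Fin N) (g : Fin N → ℝ) :
    vv n α p ⬝ᵥ g = ca n α p * g p.1 + cb n α p * g p.2 := by
  simp [dotProduct, vv, add_mul, Finset.sum_add_distrib, ite_mul]

lemma vv_self {N : ℕ} (n : ℕ) (α : Fin N → ℝ) (p : Fin N × Fin N) :
    vv n α p ⬝ᵥ vv n α p = ca n α p ^ 2 + cb n α p ^ 2 := by
  rw [vv_dot]
  by_cases h : p.1 = p.2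
  · have : cb n α p = 0 := by simp [cb, h]
    simp [vv, this, sq]
  · simp [vv, h, Ne.symm h, sq]

lemma msk_sq {N : ℕ} (n : ℕ) (i : Fin N) : msk n i * msk n i = msk n i := by
  simp [msk]

lemma C_diag {N : ℕ} (n : ℕ) (α : Fin N → ℝ) (hα : ∑ k, (α k) ^ 2 = 1) (k : Fin N) :
    ∑ p, vv n α p k ^ 2 = msk n k := by
  have e : ∀ p : Fin N × Fin N, vv n α p k ^ 2 =
      (if k = p.1 then ca n α p ^ 2 else 0) + (if k = p.2 then cb n α p ^ 2 else 0) := by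
    intro p
    by_cases h1 : k = p.1 <;> by_cases h2 : k = p.2
    · have : cb n α p = 0 := by simp [cb, ← h1, ← h2]
      simp only [vv, this, if_pos h1, if_pos h2]; ring
    · simp only [vv, if_pos h1, if_neg h2]; ring
    · simp only [vv, if_neg h1, if_pos h2]; ring
    · simp only [vv, if_neg h1, if_neg h2]; ring
  simp only [e, Finset.sum_add_distrib, Fintype.sum_prod_type]
  rw [Finset.sum_comm]
  simp only [Finset.sum_ite_eq, Finset.mem_univ, if_true]
  rw [← Finset.sum_add_distrib]
  trans ∑ j, msk n k * α j ^ 2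
  · apply Finset.sum_congr rfl
    intro j _
    simp only [ca, cb]
    have := msk_sq n k
    by_cases h : k ≤ j
    · simp only [h, if_true, not_lt.2 h, if_false]; linear_combination α j ^ 2 * this
    · simp only [h, if_false, not_le.1 h, if_true]; linear_combination α j ^ 2 * this
  · rw [← Finset.mul_sum, hα, mul_one]

lemma C_off {N : ℕ} (n : ℕ) (α : Fin N → ℝ) (k l : Fin N) (hkl : k < l) :
    ∑ p, vv n α p k * vv n α p l = msk n k * msk n l * (α k * α l) := by
  rw [Finset.sum_eq_single (k, l)]
  · simp [vv, hkl.ne, hkl.ne', ca, cb, hkl, hkl.le]; ring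
  · rintro ⟨i, j⟩ - hne
    by_cases h1 : k = i <;> by_cases h2 : l = j <;> by_cases h3 : k = j <;> by_cases h4 : l = i
    all_goals simp [vv, ca, cb, h1, h2, h3, h4]
    all_goals grind
  · simp

lemma hg_vv {N : ℕ} (n : ℕ) (α : Fin N → ℝ) (hα : ∑ k, (α k) ^ 2 = 1) (p : Fin N × Fin N) :
    ∑ t, (vv n α p ⬝ᵥ vv n α t) ^ 2
      ≤ vv n α p ⬝ᵥ vv n α p + (vv n α p ⬝ᵥ vv n α p) ^ 2 / 2 := by
  have e : ∀ t, (vv n α p ⬝ᵥ vv n α t) ^ 2 = ca n α p ^ 2 * vv n α t p.1 ^ 2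
      + cb n α p ^ 2 * vv n α t p.2 ^ 2
      + 2 * (ca n α p * cb n α p) * (vv n α t p.1 * vv n α t p.2) := by
    intro t; rw [vv_dot]; ring
  simp only [e, Finset.sum_add_distrib, ← Finset.mul_sum, C_diag n α hα, vv_self]
  have m1 : ∀ i : Fin N, msk n i ≤ 1 := fun i => by simp only [msk]; split_ifs <;> norm_num
  have a1 := mul_le_mul_of_nonneg_left (m1 p.1) (sq_nonneg (ca n α p))
  have a2 := mul_le_mul_of_nonneg_left (m1 p.2) (sq_nonneg (cb n α p))
  have a3 : (ca n α p * cb n α p) * ∑ t, (vv n α t p.1 * vv n α t p.2)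
      = ca n α p ^ 2 * cb n α p ^ 2 := by
    by_cases h : p.1 < p.2
    · rw [C_off n α _ _ h]
      simp only [ca, cb, h, h.le, if_true]
      ring
    · simp [cb, h]
  nlinarith [sq_nonneg (ca n α p ^ 2 - cb n α p ^ 2)]

lemma x_le {N : ℕ} (n : ℕ) (α : Fin N → ℝ) (hα : ∑ k, (α k) ^ 2 = 1) (p : Fin N × Fin N) :
    vv n α p ⬝ᵥ vv n α p ≤ 1 := by
  rw [vv_self]
  have m1 : ∀ i : Fin N, ∀ x : ℝ, (msk n i * x) ^ 2 ≤ x ^ 2 := fun i x => by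
    simp only [msk]; split_ifs <;> simp; positivity
  have s1 : ∀ i, α i ^ 2 ≤ 1 := fun i => by
    rw [← hα]; exact Finset.single_le_sum (f := fun k => α k ^ 2)
      (fun _ _ => sq_nonneg _) (Finset.mem_univ i)
  by_cases h : p.1 < p.2
  · have : ∑ k ∈ {p.1, p.2}, α k ^ 2 ≤ ∑ k, α k ^ 2 :=
      Finset.sum_le_sum_of_subset_of_nonneg (Finset.subset_univ _) (fun _ _ _ => sq_nonneg _)
    rw [Finset.sum_pair h.ne, hα] at this
    simp only [ca, cb, h, h.le, if_true]
    linarith [m1 p.1 (α p.2), m1 p.2 (α p.1)]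
  · simp only [ca, cb, h, if_false]
    split_ifs
    · linarith [m1 p.1 (α p.2), s1 p.2]
    · norm_num

lemma mask_sum {N n : ℕ} (hn : n ≤ N) (f : Fin N → ℝ) :
    ∑ k, msk n k * f k = ∑ j : Fin n, f (Fin.castLE hn j) := by
  obtain ⟨m, rfl⟩ := Nat.exists_eq_add_of_le hn
  rw [Fin.sum_univ_add]
  simp [msk]
  rfl

lemma sum_x {N n : ℕ} (hn : n ≤ N) (α : Fin N → ℝ) (hα : ∑ k, (α k) ^ 2 = 1) :
    ∑ p, vv n α p ⬝ᵥ vv n α p = n := by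
  simp only [dotProduct]
  rw [Finset.sum_comm]
  simp only [← sq, C_diag n α hα]
  simpa using mask_sum hn (fun _ => 1)

lemma X_eq {N n : ℕ} (α : Fin N → ℝ) (ω : Fin N → Fin N → Bool) (l : Fin N) :
    (∑ p : Fin N × Fin N, rad (ω p.1 p.2) • vv n α p) l = msk n l * ∑ k, rsym ω l k * α k := by
  simp only [Finset.sum_apply, Pi.smul_apply, smul_eq_mul, vv, mul_add, Finset.sum_add_distrib,
    Fintype.sum_prod_type, mul_ite, mul_zero]
  rw [Finset.sum_comm]
  simp only [Finset.sum_ite_eq, Finset.mem_univ, if_true]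
  rw [← Finset.sum_add_distrib, Finset.mul_sum]
  apply Finset.sum_congr rfl
  intro j _
  simp only [ca, cb, rsym]
  by_cases h : l ≤ j
  · simp only [h, if_true, not_lt.2 h, if_false]; ring
  · simp only [h, if_false, not_le.1 h, if_true]; ring

lemma S_eq {N n : ℕ} (hN : 1 ≤ N) (hn : n ≤ N) (α : Fin N → ℝ) (ω : Fin N → Fin N → Bool) :
    (∑ p : Fin N × Fin N, rad (ω p.1 p.2) • vv n α p) ⬝ᵥ
      (∑ p : Fin N × Fin N, rad (ω p.1 p.2) • vv n α p) = N * S hn α ω := by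
  have hN' : (0:ℝ) < N := by exact_mod_cast hN
  simp only [dotProduct, X_eq]
  have : ∀ l : Fin N, (msk n l * ∑ k, rsym ω l k * α k) * (msk n l * ∑ k, rsym ω l k * α k)
      = msk n l * (∑ k, rsym ω l k * α k) ^ 2 := by
    intro l; linear_combination (∑ k, rsym ω l k * α k) ^ 2 * msk_sq n l
  simp only [this]
  rw [mask_sum hn (fun l => (∑ k, rsym ω l k * α k) ^ 2)]
  simp only [S, Q, mul_pow, inv_pow, Real.sq_sqrt hN'.le]
  rw [Finset.mul_sum]
  apply Finset.sum_congr rfl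
  intro j _
  rw [← mul_assoc, mul_inv_cancel₀ hN'.ne', one_mul]

lemma exists_h (ε : ℝ) (hε0 : 0 < ε) (hε1 : ε < 1) :
    ∃ h : ℝ, 0 < h ∧ h ≤ 1 / 8 ∧ h ^ 2 - ε * h < -(1 / 2) * (ε ^ 2 / 2 - ε ^ 3 / 3) := by
  by_cases h : ε ≤ 1 / 4
  · refine ⟨ε / 2, by linarith, by linarith, ?_⟩
    have : 0 < ε ^ 3 := by positivity
    nlinarith
  · refine ⟨1 / 8, by norm_num, le_rfl, ?_⟩
    push Not at h
    nlinarith [mul_nonneg hε0.le (sq_nonneg (ε - 5 / 8)), sq_nonneg (ε - 5 / 8),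
      mul_pos (sub_pos.2 h) (sub_pos.2 hε1)]

theorem stmt3 {N n : ℕ} (hN : 1 ≤ N) (hn1 : 1 ≤ n) (hnN : n ≤ N)
    (α : Fin N → ℝ) (hα : ∑ k, (α k) ^ 2 = 1)
    (ε : ℝ) (hε0 : 0 < ε) (hε1 : ε < 1) :
    (μsym N) {ω | S hnN α ω < (1 - ε) * n / N}
      < ENNReal.ofReal (Real.exp (-((n : ℝ) / 2) * (ε ^ 2 / 2 - ε ^ 3 / 3))) := by
  classical
  obtain ⟨h, h0, h1, h2⟩ := exists_h ε hε0 hε1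
  have hN' : (0:ℝ) < N := by exact_mod_cast hN
  have hn' : (0:ℝ) < n := by exact_mod_cast hn1
  have key := main_bound (vv n α) h h0 h1 (x_le n α hα) (hg_vv n α hα) n (sum_x hnN α hα)
  have hcv : ∑ r : Fin N × Fin N → Bool, Real.exp (-(h * ((∑ s, rad (r s) • vv n α s) ⬝ᵥ
      (∑ s, rad (r s) • vv n α s)))) = ∑ ω : Fin N → Fin N → Bool,
        Real.exp (-(h * (N * S hnN α ω))) := by
    apply Fintype.sum_equiv (Equiv.curry (Fin N) (Fin N) Bool)
    intro r
    rw [← S_eq hN hnN]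
    rfl
  have hcard : Fintype.card (Fin N × Fin N → Bool) = Fintype.card (Fin N → Fin N → Bool) :=
    Fintype.card_congr (Equiv.curry _ _ _)
  rw [hcv, hcard] at key
  set E : Finset (Fin N → Fin N → Bool) :=
    Finset.univ.filter (fun ω => S hnN α ω < (1 - ε) * n / N) with hE
  have hcount : (E.card : ℝ) ≤ Fintype.card (Fin N → Fin N → Bool) *
      Real.exp (n * (h ^ 2 - ε * h)) := by
    have a1 : (E.card : ℝ) ≤ ∑ ω : Fin N → Fin N → Bool,
        Real.exp (h * ((1 - ε) * n)) * Real.exp (-(h * (N * S hnN α ω))) := by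
      rw [Finset.cast_card]
      refine (Finset.sum_le_sum ?_).trans (Finset.sum_le_sum_of_subset_of_nonneg
        (Finset.subset_univ E) (fun _ _ _ => by positivity))
      intro ω hω
      rw [hE, Finset.mem_filter, lt_div_iff₀ hN'] at hω
      rw [← Real.exp_add]
      apply Real.one_le_exp
      nlinarith [hω.2]
    rw [← Finset.mul_sum] at a1
    refine a1.trans ((mul_le_mul_of_nonneg_left key (Real.exp_pos _).le).trans ?_)
    rw [mul_left_comm, ← Real.exp_add]
    apply le_of_eq
    congr 2
    ring
  have hcpos : (0:ℝ) < Fintype.card (Fin N → Fin N → Bool) := by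
    exact_mod_cast Fintype.card_pos
  have hμ : (μsym N) {ω | S hnN α ω < (1 - ε) * n / N}
      = ENNReal.ofReal ((E.card : ℝ) / Fintype.card (Fin N → Fin N → Bool)) := by
    rw [μsym, PMF.toMeasure_uniformOfFintype_apply _ (Set.toFinite _).measurableSet,
      ENNReal.ofReal_div_of_pos hcpos, ENNReal.ofReal_natCast, ENNReal.ofReal_natCast]
    congr 2
    rw [Fintype.card_subtype]
    rfl
  rw [hμ]
  apply (ENNReal.ofReal_lt_ofReal_iff (Real.exp_pos _)).2
  rw [div_lt_iff₀ hcpos]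
  refine lt_of_le_of_lt hcount ?_
  rw [mul_comm]
  apply mul_lt_mul_of_pos_right _ hcpos
  apply Real.exp_lt_exp.2
  nlinarith
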